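/- Let ρ ∈ (0,1), R, L, c₁ > 0, η > 0 and ϰ, ϰ′ > 0. For a sign σ ∈ {+1,−1}, ε ∈ (0,1), real numbers a ≤ b, and z ∈ ℝ, define the (possibly empty) interval B^ε_σ(z) = ε^{−1} R L^{−1/ρ} · [ ((εa − εz − σε^{1+η}) ∨ 0)^{1/ρ}, ((εb − εz + σε^{1+η}) ∨ 0)^{1/ρ} ]. Then there exist constants δ″, p, C > 0 such that for both σ ∈ {+1,−1} and all sufficiently small ε > 0: sup over x ∈ K_ϰ(ε), intervals [a,b] ⊆ K_{ϰ′}(ε), and z ∈ ℝ of | ε^{−(1/ρ−1)} ∫_{B^ε_σ(z)} g_{c₁}(s − x) ds − R L^{−1/ρ} g_{c₁}(x) h(a,b;z) | ≤ C ε^{δ″} (|z|^p + 1), where h(a,b;z) = ((b−z) ∨ 0)^{1/ρ} − ((a−z) ∨ 0)^{1/ρ}. -/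

import Mathlib

/-!
The interval `B^ε_σ(z)` lies within `O(ε^(1/ρ - 1))`, up to powers of `|z|` and `log (1/ε)`, of the
origin. Over an interval `[u, v]` with `0 ≤ u` the integral of a `K`-Lipschitz function `f` is
`(v - u)⁺ • f 0` up to `K * v²`, so after dividing by `ε^(1/ρ - 1)` freezing `f` at `0` still leaves
an error of order `ε^(1/ρ - 1)`, which is small because `ρ < 1`. Replacing the normalised length by
`h(a,b;z)` costs `O(ε^η)`, because the endpoints are only perturbed by `±σ ε^η` inside the positive
parts. Half of the resulting exponent `min (1/ρ - 1) η` pays for every power of `log (1/ε)`.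
All of this is uniform in `f` with a given Lipschitz constant and a given bound on `‖f 0‖`; the
translates `f s = g_c(s - x)` share both, whence the uniformity in `x`.
-/

open MeasureTheory

/-- `lE ε = log (1/ε)`. -/
noncomputable def lE (ε : ℝ) : ℝ := Real.log (1 / ε)

/-- `K_ϰ(ε) = [-(l_ε)^ϰ, (l_ε)^ϰ]`. -/
noncomputable def Kset (ϰ ε : ℝ) : Set ℝ := Set.Icc (-(lE ε ^ ϰ)) (lE ε ^ ϰ)

/-- The centered Gaussian density with variance `c`. -/
noncomputable def gaussDensity (c x : ℝ) : ℝ :=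
  (Real.sqrt (2 * Real.pi * c))⁻¹ * Real.exp (-(x ^ 2) / (2 * c))

/-- `h(a,b;z) = ((b-z) ∨ 0)^{1/ρ} - ((a-z) ∨ 0)^{1/ρ}`. -/
noncomputable def hFun (ρ a b z : ℝ) : ℝ :=
  (max (b - z) 0) ^ (1 / ρ) - (max (a - z) 0) ^ (1 / ρ)

/-- The (possibly empty) interval `B^ε_σ(z)`. -/
noncomputable def Bset (ρ R L η σ ε a b z : ℝ) : Set ℝ :=
  Set.Icc (ε⁻¹ * R * L ^ (-(1 / ρ)) * (max (ε * a - ε * z - σ * ε ^ (1 + η)) 0) ^ (1 / ρ))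
    (ε⁻¹ * R * L ^ (-(1 / ρ)) * (max (ε * b - ε * z + σ * ε ^ (1 + η)) 0) ^ (1 / ρ))

open Set Filter Topology
open scoped NNReal

section RealPowers

theorem abs_rpow_sub_rpow_le {q T u v : ℝ} (hq : 1 ≤ q) (hu : u ∈ Icc 0 T) (hv : v ∈ Icc 0 T) :
    |u ^ q - v ^ q| ≤ q * T ^ (q - 1) * |u - v| := by
  refine (convex_Icc 0 T).norm_image_sub_le_of_norm_hasDerivWithin_le
    (fun t _ => (Real.hasDerivAt_rpow_const (.inr hq)).hasDerivWithinAt) (fun t ht => ?_) hv hu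
  have ht₀ : 0 ≤ t := ht.1
  rw [Real.norm_of_nonneg (by positivity)]
  have power_le : t ^ (q - 1) ≤ T ^ (q - 1) := Real.rpow_le_rpow ht₀ ht.2 (by linarith)
  gcongr

theorem abs_max_add_zero_rpow_sub_le {q T y s : ℝ} (hq : 1 ≤ q) (hT : |y| + |s| ≤ T) :
    |max (y + s) 0 ^ q - max y 0 ^ q| ≤ q * T ^ (q - 1) * |s| := by
  have hT0 : 0 ≤ T := by linarith [abs_nonneg y, abs_nonneg s]
  have sum_le : y + s ≤ T := by linarith [le_abs_self y, le_abs_self s]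
  have le_T : y ≤ T := by linarith [le_abs_self y, abs_nonneg s]
  have max_sub_le : |max (y + s) 0 - max y 0| ≤ |s| := by
    simpa only [add_sub_cancel_left] using abs_max_sub_max_le_abs (y + s) y 0
  refine (abs_rpow_sub_rpow_le hq ⟨le_max_right _ _, max_le sum_le hT0⟩
    ⟨le_max_right _ _, max_le le_T hT0⟩).trans ?_
  gcongr

theorem max_mul_zero_rpow {ε : ℝ} (hε : 0 ≤ ε) (t q : ℝ) :
    max (ε * t) 0 ^ q = ε ^ q * max t 0 ^ q := by
  rw [← Real.mul_rpow hε (le_max_right _ _), mul_max_of_nonneg _ _ hε, mul_zero]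

theorem add_one_rpow_le {x p : ℝ} (hx : 0 ≤ x) (hp : 1 ≤ p) :
    (x + 1) ^ p ≤ 2 ^ (p - 1) * (x ^ p + 1) := by
  simpa using! NNReal.coe_le_coe.2 (NNReal.rpow_add_le_mul_rpow_add_rpow ⟨x, hx⟩ 1 hp)

end RealPowers

section LipschitzIntegral

variable {E : Type*} [NormedAddCommGroup E] [NormedSpace ℝ E] [CompleteSpace E]

theorem norm_setIntegral_sub_smul_le_of_lipschitzWith {X : Type*} [PseudoMetricSpace X]
    [MeasurableSpace X] {μ : Measure X} {f : X → E} {K : ℝ≥0} (hf : LipschitzWith K f) {s : Set X}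
    {x₀ : X} {r : ℝ} (hs : s ⊆ Metric.closedBall x₀ r) (hμ : μ s < ⊤) (hfs : IntegrableOn f s μ) :
    ‖(∫ x in s, f x ∂μ) - μ.real s • f x₀‖ ≤ K * r * μ.real s := by
  rw [← setIntegral_const, ← integral_sub hfs (integrableOn_const hμ.ne)]
  refine norm_setIntegral_le_of_norm_le_const hμ fun x hx => ?_
  rw [← dist_eq_norm]
  exact hf.dist_le_mul_of_le (hs hx)

variable {f : ℝ → E} {K : ℝ≥0}

theorem norm_setIntegral_Icc_sub_smul_le (hf : LipschitzWith K f) {u v u₀ v₀ D : ℝ} (hu : 0 ≤ u)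
    (hv : 0 ≤ v) (h₀ : u₀ ≤ v₀) (huD : |u - u₀| ≤ D) (hvD : |v - v₀| ≤ D) :
    ‖(∫ s in Icc u v, f s) - (v₀ - u₀) • f 0‖ ≤ K * v ^ 2 + 2 * D * ‖f 0‖ := by
  have freeze : ‖(∫ s in Icc u v, f s) - max (v - u) 0 • f 0‖ ≤ K * v * max (v - u) 0 := by
    rw [← Real.volume_real_Icc]
    refine norm_setIntegral_sub_smul_le_of_lipschitzWith hf (fun s hs => ?_) measure_Icc_lt_top
      hf.continuous.continuousOn.integrableOn_Icc
    rw [mem_closedBall_zero_iff, Real.norm_of_nonneg (hu.trans hs.1)]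
    exact hs.2
  have length_le : max (v - u) 0 ≤ v := max_le (by linarith) hv
  have length_sub : |max (v - u) 0 - (v₀ - u₀)| ≤ 2 * D :=
    calc |max (v - u) 0 - (v₀ - u₀)| = |max (v - u) 0 - max (v₀ - u₀) 0| := by
          rw [max_eq_left (sub_nonneg.2 h₀)]
      _ ≤ |(v - v₀) - (u - u₀)| := by
          rw [sub_sub_sub_comm]
          exact abs_max_sub_max_le_abs _ _ _
      _ ≤ 2 * D := (abs_sub _ _).trans (by linarith)
  calc ‖(∫ s in Icc u v, f s) - (v₀ - u₀) • f 0‖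
      = ‖((∫ s in Icc u v, f s) - max (v - u) 0 • f 0)
          + (max (v - u) 0 - (v₀ - u₀)) • f 0‖ := by
        rw [sub_smul (max _ _), sub_add_sub_cancel]
    _ ≤ K * v * max (v - u) 0 + |max (v - u) 0 - (v₀ - u₀)| * ‖f 0‖ := by
        grw [norm_add_le, norm_smul, freeze, Real.norm_eq_abs]
    _ ≤ K * v * v + 2 * D * ‖f 0‖ := by gcongr
    _ = K * v ^ 2 + 2 * D * ‖f 0‖ := by ring

theorem norm_inv_smul_setIntegral_Icc_sub_smul_le (hf : LipschitzWith K f) {M e A B A₀ B₀ D : ℝ}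
    (hM : 0 ≤ M) (he : 0 < e) (hA : 0 ≤ A) (hB : 0 ≤ B) (h₀ : A₀ ≤ B₀) (hAD : |A - A₀| ≤ D)
    (hBD : |B - B₀| ≤ D) :
    ‖e⁻¹ • (∫ s in Icc (e * M * A) (e * M * B), f s) - (M * (B₀ - A₀)) • f 0‖ ≤
      K * M ^ 2 * e * B ^ 2 + 2 * M * ‖f 0‖ * D := by
  have scale {x x₀ : ℝ} (hx : |x - x₀| ≤ D) : |e * M * x - e * M * x₀| ≤ e * M * D := by
    rw [← mul_sub, abs_mul, abs_of_nonneg (by positivity : 0 ≤ e * M)]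
    gcongr
  have bound := norm_setIntegral_Icc_sub_smul_le hf (u := e * M * A) (v := e * M * B)
    (by positivity) (by positivity) (by gcongr) (scale hAD) (scale hBD)
  have factor : e⁻¹ • (∫ s in Icc (e * M * A) (e * M * B), f s) - (M * (B₀ - A₀)) • f 0 =
      e⁻¹ • ((∫ s in Icc (e * M * A) (e * M * B), f s) - (e * M * B₀ - e * M * A₀) • f 0) := by
    rw [smul_sub, smul_smul]
    congr 2
    field_simp
  rw [factor, norm_smul, Real.norm_of_nonneg (inv_nonneg.2 he.le), inv_mul_le_iff₀ he]
  exact bound.trans_eq (by ring)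

end LipschitzIntegral

section Gaussian

theorem gaussDensity_nonneg (c x : ℝ) : 0 ≤ gaussDensity c x := by
  unfold gaussDensity
  positivity

theorem gaussDensity_neg (c x : ℝ) : gaussDensity c (-x) = gaussDensity c x := by
  simp only [gaussDensity, neg_sq]

theorem norm_gaussDensity_le_apply_zero {c : ℝ} (hc : 0 ≤ c) (x : ℝ) :
    ‖gaussDensity c x‖ ≤ gaussDensity c 0 := by
  rw [Real.norm_of_nonneg (gaussDensity_nonneg c x)]
  have exponent_le : -x ^ 2 / (2 * c) ≤ -0 ^ 2 / (2 * c) := by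
    gcongr ?_ / _
    simpa using sq_nonneg x
  exact mul_le_mul_of_nonneg_left (Real.exp_le_exp.2 exponent_le) (by positivity)

theorem lipschitzWith_exp_neg_sq : LipschitzWith 1 fun t : ℝ => Real.exp (-t ^ 2) := by
  have deriv_eq (t : ℝ) :
      HasDerivAt (fun t : ℝ => Real.exp (-t ^ 2)) (Real.exp (-t ^ 2) * -(2 * t)) t := by
    simpa using (hasDerivAt_pow 2 t).neg.exp
  refine lipschitzWith_of_nnnorm_deriv_le (fun t => (deriv_eq t).differentiableAt) fun t => ?_
  have two_mul_abs_le : 2 * |t| ≤ Real.exp (t ^ 2) := by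
    have := two_mul_le_add_sq |t| 1
    rw [sq_abs] at this
    linarith [Real.add_one_le_exp (t ^ 2)]
  rw [(deriv_eq t).deriv, ← NNReal.coe_le_coe, coe_nnnorm, norm_mul, norm_neg, norm_mul,
    Real.norm_of_nonneg (Real.exp_nonneg _), Real.exp_neg, inv_mul_le_iff₀ (Real.exp_pos _)]
  simpa using two_mul_abs_le

theorem exists_lipschitzWith_gaussDensity_sub {c : ℝ} (hc : 0 ≤ c) :
    ∃ K, ∀ x, LipschitzWith K fun s => gaussDensity c (s - x) := by
  have eq_rescaled : gaussDensity c = fun x =>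
      (√(2 * Real.pi * c))⁻¹ • Real.exp (-((√(2 * c))⁻¹ • x) ^ 2) := by
    ext x
    simp only [gaussDensity, smul_eq_mul, mul_pow, inv_pow]
    rw [Real.sq_sqrt (by positivity)]
    ring_nf
  have lipschitz := (lipschitzWith_smul (√(2 * Real.pi * c))⁻¹).comp
    (lipschitzWith_exp_neg_sq.comp (lipschitzWith_smul (√(2 * c))⁻¹))
  rw [eq_rescaled]
  exact ⟨_, fun x => lipschitz.comp (LipschitzWith.id.sub (.const x))⟩

end Gaussian

section Estimate

theorem Bset_eq_Icc {ε : ℝ} (hε : 0 < ε) (ρ R L η σ a b z : ℝ) :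
    Bset ρ R L η σ ε a b z =
      Icc (ε ^ (1 / ρ - 1) * (R * L ^ (-(1 / ρ))) * max (a - z - σ * ε ^ η) 0 ^ (1 / ρ))
        (ε ^ (1 / ρ - 1) * (R * L ^ (-(1 / ρ))) * max (b - z + σ * ε ^ η) 0 ^ (1 / ρ)) := by
  have lower : ε * a - ε * z - σ * (ε * ε ^ η) = ε * (a - z - σ * ε ^ η) := by ring
  have upper : ε * b - ε * z + σ * (ε * ε ^ η) = ε * (b - z + σ * ε ^ η) := by ring
  rw [Bset, Real.rpow_add hε, Real.rpow_one, lower, upper, max_mul_zero_rpow hε.le,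
    max_mul_zero_rpow hε.le, Real.rpow_sub_one hε.ne']
  congr 1 <;> ring

theorem eventually_lE_rpow_le (k : ℝ) {m : ℝ} (hm : 0 < m) :
    ∀ᶠ ε in 𝓝[>] 0, lE ε ^ k ≤ ε ^ (-m) := by
  filter_upwards [(isLittleO_abs_log_rpow_rpow_nhdsGT_zero k (neg_lt_zero.2 hm)).eventuallyLE,
    Ioo_mem_nhdsGT one_pos] with ε hlog hε
  have lE_eq : lE ε = |Real.log ε| := by
    rw [lE, one_div, Real.log_inv, abs_of_neg (Real.log_neg hε.1 hε.2)]
  rw [lE_eq]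
  exact (le_abs_self _).trans (hlog.trans_eq (Real.norm_of_nonneg (Real.rpow_nonneg hε.1.le _)))

variable {E : Type*} [NormedAddCommGroup E] [NormedSpace ℝ E] [CompleteSpace E]

theorem norm_smul_setIntegral_Bset_sub_le {f : ℝ → E} {K : ℝ≥0} (hf : LipschitzWith K f)
    {ρ R L η σ ε a b z T : ℝ} (hρ0 : 0 < ρ) (hρ1 : ρ ≤ 1) (hR : 0 ≤ R) (hL : 0 ≤ L) (hσ : |σ| ≤ 1)
    (hε : 0 < ε) (hab : a ≤ b) (ha : |a| + |z| + ε ^ η ≤ T) (hb : |b| + |z| + ε ^ η ≤ T) :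
    ‖ε ^ (-(1 / ρ - 1)) • (∫ s in Bset ρ R L η σ ε a b z, f s) -
        (R * L ^ (-(1 / ρ)) * hFun ρ a b z) • f 0‖ ≤
      K * (R * L ^ (-(1 / ρ))) ^ 2 * ε ^ (1 / ρ - 1) * T ^ (2 * (1 / ρ)) +
        2 * (R * L ^ (-(1 / ρ))) * ‖f 0‖ * (1 / ρ * T ^ (1 / ρ - 1) * ε ^ η) := by
  rw [Bset_eq_Icc hε, hFun]
  have hq : 1 ≤ 1 / ρ := one_le_one_div hρ0 hρ1
  have hM : 0 ≤ R * L ^ (-(1 / ρ)) := by positivity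
  generalize R * L ^ (-(1 / ρ)) = M at hM ⊢
  generalize 1 / ρ = q at hq ⊢
  have hT : 0 ≤ T := le_trans (by positivity) ha
  have shift_le : |σ * ε ^ η| ≤ ε ^ η := by
    rw [abs_mul, abs_of_nonneg (by positivity : 0 ≤ ε ^ η)]
    exact mul_le_of_le_one_left (by positivity) hσ
  have perturb {t s : ℝ} (ht : |t| + |z| + ε ^ η ≤ T) (hs : |s| ≤ ε ^ η) :
      |max (t - z + s) 0 ^ q - max (t - z) 0 ^ q| ≤ q * T ^ (q - 1) * ε ^ η := by
    refine (abs_max_add_zero_rpow_sub_le hq (T := T) ?_).trans ?_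
    · linarith [abs_sub t z]
    · gcongr
  have upper_le : b - z + σ * ε ^ η ≤ T := by
    linarith [le_abs_self b, neg_abs_le z, le_of_abs_le shift_le]
  have upper_sq_le : (max (b - z + σ * ε ^ η) 0 ^ q) ^ 2 ≤ T ^ (2 * q) := by
    rw [← Real.rpow_mul_natCast (le_max_right _ _), Nat.cast_ofNat, mul_comm q]
    gcongr
    exact max_le upper_le hT
  rw [Real.rpow_neg hε.le, sub_eq_add_neg (a - z)]
  refine (norm_inv_smul_setIntegral_Icc_sub_smul_le hf hM (Real.rpow_pos_of_pos hε (q - 1))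
    (by positivity) (by positivity) (by gcongr) (perturb ha (by rwa [abs_neg]))
    (perturb hb shift_le)).trans ?_
  gcongr

theorem norm_smul_setIntegral_Bset_sub_le_rpow_min {f : ℝ → E} {K G : ℝ≥0}
    (hf : LipschitzWith K f) (hfG : ‖f 0‖ ≤ G) {ρ R L η σ ε a b z T : ℝ} (hρ0 : 0 < ρ)
    (hρ1 : ρ ≤ 1) (hR : 0 ≤ R) (hL : 0 ≤ L) (hη : 0 ≤ η) (hσ : |σ| ≤ 1) (hε0 : 0 < ε) (hε1 : ε ≤ 1)
    (hab : a ≤ b) (ha : |a| + |z| + 1 ≤ T) (hb : |b| + |z| + 1 ≤ T) :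
    ‖ε ^ (-(1 / ρ - 1)) • (∫ s in Bset ρ R L η σ ε a b z, f s) -
        (R * L ^ (-(1 / ρ)) * hFun ρ a b z) • f 0‖ ≤
      (K * (R * L ^ (-(1 / ρ))) ^ 2 + 2 * (R * L ^ (-(1 / ρ))) * G * (1 / ρ)) *
        (ε ^ min (1 / ρ - 1) η * T ^ (2 * (1 / ρ))) := by
  have hT : 1 ≤ T := by linarith [abs_nonneg a, abs_nonneg z]
  have shift_le_one : ε ^ η ≤ 1 := Real.rpow_le_one hε0.le hε1 hη
  have hq : 0 < 1 / ρ := by positivity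
  have scale_le : ε ^ (1 / ρ - 1) ≤ ε ^ min (1 / ρ - 1) η :=
    Real.rpow_le_rpow_of_exponent_ge hε0 hε1 (min_le_left _ _)
  have shift_le : ε ^ η ≤ ε ^ min (1 / ρ - 1) η :=
    Real.rpow_le_rpow_of_exponent_ge hε0 hε1 (min_le_right _ _)
  have power_le : T ^ (1 / ρ - 1) ≤ T ^ (2 * (1 / ρ)) :=
    Real.rpow_le_rpow_of_exponent_le hT (by linarith)
  grw [norm_smul_setIntegral_Bset_sub_le hf hρ0 hρ1 hR hL hσ hε0 hab (T := T) (by linarith)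
    (by linarith), hfG, scale_le, shift_le, power_le]
  exact le_of_eq (by ring)

theorem rpow_mul_two_mul_rpow_le {ε y p δ : ℝ} (hε : 0 < ε) (hy : 0 ≤ y) (hp : 1 ≤ p) :
    ε ^ δ * (2 * ε ^ (-(δ / (2 * p))) * (y + 1)) ^ p ≤
      2 ^ (2 * p - 1) * ε ^ (δ / 2) * (y ^ p + 1) := by
  have two_pow : (2 : ℝ) ^ p * 2 ^ (p - 1) = 2 ^ (2 * p - 1) := by
    rw [← Real.rpow_add two_pos]
    ring_nf
  have half_power : ε ^ δ * (ε ^ (-(δ / (2 * p)))) ^ p = ε ^ (δ / 2) := by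
    rw [← Real.rpow_mul hε.le, ← Real.rpow_add hε]
    congr 1
    field
  calc ε ^ δ * (2 * ε ^ (-(δ / (2 * p))) * (y + 1)) ^ p
      = 2 ^ p * (ε ^ δ * (ε ^ (-(δ / (2 * p)))) ^ p) * (y + 1) ^ p := by
        rw [Real.mul_rpow (by positivity) (by positivity), Real.mul_rpow two_pos.le (by positivity)]
        ring
    _ ≤ 2 ^ p * ε ^ (δ / 2) * (2 ^ (p - 1) * (y ^ p + 1)) := by
        rw [half_power]
        gcongr
        exact add_one_rpow_le hy hp
    _ = 2 ^ (2 * p - 1) * ε ^ (δ / 2) * (y ^ p + 1) := by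
        rw [← two_pow]
        ring

theorem stmt15_general (ρ R L η ϰ' : ℝ) (K G : ℝ≥0) (hρ0 : 0 < ρ) (hρ1 : ρ < 1) (hR : 0 < R)
    (hL : 0 < L) (hη : 0 < η) :
    ∃ δ p C : ℝ, 0 < δ ∧ 0 < p ∧ 0 < C ∧ ∃ ε₀ : ℝ, 0 < ε₀ ∧
      ∀ f : ℝ → E, LipschitzWith K f → ‖f 0‖ ≤ G →
      ∀ σ : ℝ, |σ| ≤ 1 →
      ∀ ε : ℝ, 0 < ε → ε < ε₀ →
      ∀ a b : ℝ, a ≤ b → Icc a b ⊆ Kset ϰ' ε → ∀ z : ℝ,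
        ‖ε ^ (-(1 / ρ - 1)) • (∫ s in Bset ρ R L η σ ε a b z, f s) -
            (R * L ^ (-(1 / ρ)) * hFun ρ a b z) • f 0‖ ≤
          C * ε ^ δ * (|z| ^ p + 1) := by
  have hq : 1 < 1 / ρ := one_lt_one_div hρ0 hρ1
  set A := K * (R * L ^ (-(1 / ρ))) ^ 2 + 2 * (R * L ^ (-(1 / ρ))) * G * (1 / ρ) + 1
  set p := 2 * (1 / ρ)
  set δ := min (1 / ρ - 1) η
  have p_pos : 0 < p := by positivity
  have δ_pos : 0 < δ := lt_min (by linarith) hη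
  have m_pos : 0 < δ / (2 * p) := div_pos δ_pos (by positivity)
  obtain ⟨ε₁, ε₁_pos, log_le⟩ := mem_nhdsGT_iff_exists_Ioo_subset.1
    (eventually_lE_rpow_le ϰ' m_pos)
  refine ⟨δ / 2, p, A * 2 ^ (2 * p - 1), half_pos δ_pos, p_pos, by positivity, min ε₁ 1,
    lt_min ε₁_pos one_pos, ?_⟩
  intro f hf hfG σ hσ ε hε hεε₀ a b hab hK z
  obtain ⟨hε₁, hε1⟩ := lt_min_iff.1 hεε₀
  have one_le : 1 ≤ ε ^ (-(δ / (2 * p))) :=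
    Real.one_le_rpow_of_pos_of_le_one_of_nonpos hε hε1.le (neg_nonpos.2 m_pos.le)
  have le_T {t : ℝ} (ht : t ∈ Icc a b) :
      |t| + |z| + 1 ≤ 2 * ε ^ (-(δ / (2 * p))) * (|z| + 1) := by
    have abs_t_le : |t| ≤ ε ^ (-(δ / (2 * p))) := (abs_le.2 (hK ht)).trans (log_le ⟨hε, hε₁⟩)
    nlinarith [abs_nonneg z]
  grw [norm_smul_setIntegral_Bset_sub_le_rpow_min hf hfG hρ0 hρ1.le hR.le hL.le hη.le hσ hε hε1.le
    hab (le_T (left_mem_Icc.2 hab)) (le_T (right_mem_Icc.2 hab)),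
    rpow_mul_two_mul_rpow_le hε (abs_nonneg z) (by linarith), ← mul_assoc, ← mul_assoc]
  gcongr
  exact le_add_of_nonneg_right zero_le_one

end Estimate

theorem stmt15 (ρ R L c₁ η ϰ ϰ' : ℝ)
    (hρ0 : 0 < ρ) (hρ1 : ρ < 1) (hR : 0 < R) (hL : 0 < L) (hc₁ : 0 < c₁)
    (hη : 0 < η) (hϰ : 0 < ϰ) (hϰ' : 0 < ϰ') :
    ∃ δ p C : ℝ, 0 < δ ∧ 0 < p ∧ 0 < C ∧ ∃ ε₀ : ℝ, 0 < ε₀ ∧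
      ∀ σ : ℝ, σ = 1 ∨ σ = -1 →
      ∀ ε : ℝ, 0 < ε → ε < ε₀ →
      ∀ x ∈ Kset ϰ ε, ∀ a b : ℝ, a ≤ b → Set.Icc a b ⊆ Kset ϰ' ε → ∀ z : ℝ,
        |ε ^ (-(1 / ρ - 1)) * (∫ s in Bset ρ R L η σ ε a b z, gaussDensity c₁ (s - x)) -
            R * L ^ (-(1 / ρ)) * gaussDensity c₁ x * hFun ρ a b z| ≤
          C * ε ^ δ * (|z| ^ p + 1) := by
  obtain ⟨K, hK⟩ := exists_lipschitzWith_gaussDensity_sub hc₁.le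
  obtain ⟨δ, p, C, hδ, hp, hC, ε₀, hε₀, bound⟩ := stmt15_general (E := ℝ) ρ R L η ϰ' K
    ⟨gaussDensity c₁ 0, gaussDensity_nonneg c₁ 0⟩ hρ0 hρ1 hR hL hη
  refine ⟨δ, p, C, hδ, hp, hC, ε₀, hε₀, fun σ hσ ε hε hεε₀ x _ a b hab hsub z => ?_⟩
  simpa [gaussDensity_neg, mul_right_comm] using bound _ (hK x)
    (norm_gaussDensity_le_apply_zero hc₁.le _) σ (by rcases hσ with rfl | rfl <;> simp) ε hε hεε₀
    a b hab hsub z
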